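/- Let V be the k-linear span of the set of monomials u of A with deg(u) − d(u) = 1, where for a monomial u with exponent function m we set deg(u) = Σ_{(i,r)} m(i,r) and d(u) = Σ_{(i,r)} r·m(i,r). Let ψ be the exponential automorphism of D₁, i.e. ψ(f) = Σ_{n < m} D₁^n(f)/n! whenever D₁^m(f) = 0. Then ψ maps V into V; in particular ψ restricts to an automorphism of the copy of the free Novikov algebra inside A. -/

import Mathlib

open MvPolynomial

/-- The weight `1 - r` of the variable `X (i, r)`. -/
def novWt (p : Fin 3 × ℕ) : ℤ := 1 - (p.2 : ℤ)

theorem novWt_weight (m : (Fin 3 × ℕ) →₀ ℕ) :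
    Finsupp.weight novWt m = ((m.sum fun _ e => e : ℕ) : ℤ) - ((m.sum fun p e => p.2 * e : ℕ) : ℤ) := by
  rw [Finsupp.weight_apply]
  simp only [Finsupp.sum, Nat.cast_sum, ← Finset.sum_sub_distrib]
  refine Finset.sum_congr rfl fun p _ => ?_
  simp only [novWt, nsmul_eq_mul, Nat.cast_mul]
  ring

theorem novSpan_eq (k : Type*) [Field k] :
    Submodule.span k {u : MvPolynomial (Fin 3 × ℕ) k |
        ∃ m : (Fin 3 × ℕ) →₀ ℕ, u = monomial m 1 ∧
          (m.sum fun _ e => e) = (m.sum fun p e => p.2 * e) + 1}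
      = weightedHomogeneousSubmodule k novWt 1 := by
  apply le_antisymm
  · rw [Submodule.span_le]
    rintro u ⟨m, rfl, hm⟩
    refine isWeightedHomogeneous_monomial _ _ _ ?_
    rw [novWt_weight, hm]
    push_cast
    ring
  · intro f hf
    rw [mem_weightedHomogeneousSubmodule] at hf
    rw [f.as_sum]
    refine Submodule.sum_mem _ fun m hm => ?_
    have h1 := hf (mem_support_iff.mp hm)
    rw [novWt_weight] at h1
    have : monomial m (coeff m f) = coeff m f • (monomial m 1 : MvPolynomial (Fin 3 × ℕ) k) := by
      rw [smul_monomial, smul_eq_mul, mul_one]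
    rw [this]
    refine Submodule.smul_mem _ _ (Submodule.subset_span ⟨m, rfl, ?_⟩)
    omega

theorem nov_hom_monomial {k : Type*} [Field k]
    (ψ : MvPolynomial (Fin 3 × ℕ) k ≃ₐ[k] MvPolynomial (Fin 3 × ℕ) k)
    (h : ∀ p, IsWeightedHomogeneous novWt (ψ (X p)) (novWt p)) (m : (Fin 3 × ℕ) →₀ ℕ) :
    IsWeightedHomogeneous novWt (ψ (monomial m 1)) (Finsupp.weight novWt m) := by
  induction m using Finsupp.induction_linear with
  | zero =>
    have : (monomial 0 1 : MvPolynomial (Fin 3 × ℕ) k) = 1 := rfl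
    rw [this, map_one, map_zero]
    exact isWeightedHomogeneous_one _ _
  | add f g hf hg =>
    have : (monomial (f + g) 1 : MvPolynomial (Fin 3 × ℕ) k) = monomial f 1 * monomial g 1 := by
      rw [monomial_mul, one_mul]
    rw [this, map_mul, map_add]
    exact hf.mul hg
  | single p e =>
    rw [← X_pow_eq_monomial, map_pow, Finsupp.weight_single]
    exact (h p).pow e

theorem nov_comm {k : Type*} [Field k]
    (ψ : MvPolynomial (Fin 3 × ℕ) k ≃ₐ[k] MvPolynomial (Fin 3 × ℕ) k)
    (h : ∀ p, IsWeightedHomogeneous novWt (ψ (X p)) (novWt p)) (f : MvPolynomial (Fin 3 × ℕ) k) :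
    ψ (weightedHomogeneousComponent novWt 1 f) = weightedHomogeneousComponent novWt 1 (ψ f) := by
  classical
  induction f using MvPolynomial.induction_on' with
  | add p q hp hq => simp only [map_add, hp, hq]
  | monomial m a =>
    have : monomial m a = a • (monomial m 1 : MvPolynomial (Fin 3 × ℕ) k) := by
      rw [smul_monomial, smul_eq_mul, mul_one]
    rw [this]
    simp only [map_smul]
    congr 1
    rw [weightedHomogeneousComponent_of_mem (nov_hom_monomial ψ h m),
      weightedHomogeneousComponent_of_mem
        (isWeightedHomogeneous_monomial novWt m (1 : k) (rfl : _ = Finsupp.weight novWt m))]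
    split_ifs <;> simp

/-- The exponential automorphism `ψ = exp D₁` maps the span `V` of the monomials with
`deg - d = 1` into itself, and restricts to an automorphism of this copy of the free
Novikov algebra: `ψ` maps `V` onto `V`. -/
theorem exp_D1_preserves_novikov (k : Type*) [Field k] [CharZero k]
    (δ d1 D1 : Derivation k (MvPolynomial (Fin 3 × ℕ) k) (MvPolynomial (Fin 3 × ℕ) k))
    (hδ : ∀ (i : Fin 3) (r : ℕ), δ (X (i, r)) = X (i, r + 1))
    (hd1x : ∀ r : ℕ, d1 (X ((0 : Fin 3), r)) = 2 * X ((1 : Fin 3), r))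
    (hd1y : ∀ r : ℕ, d1 (X ((1 : Fin 3), r)) = X ((2 : Fin 3), r))
    (hd1z : ∀ r : ℕ, d1 (X ((2 : Fin 3), r)) = 0)
    (w : MvPolynomial (Fin 3 × ℕ) k)
    (hw : w = X ((1 : Fin 3), (0 : ℕ)) ^ 2 - X ((0 : Fin 3), (0 : ℕ)) * X ((2 : Fin 3), (0 : ℕ)))
    (hD1 : ∀ f : MvPolynomial (Fin 3 × ℕ) k, D1 f = C ((2 : k)⁻¹) * δ (δ w) * d1 f)
    (ψ : MvPolynomial (Fin 3 × ℕ) k ≃ₐ[k] MvPolynomial (Fin 3 × ℕ) k)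
    (hψ : ∀ (f : MvPolynomial (Fin 3 × ℕ) k) (m : ℕ), (⇑D1)^[m] f = 0 →
      ψ f = ∑ n ∈ Finset.range m, (n.factorial : k)⁻¹ • (⇑D1)^[n] f) :
    (∀ f ∈ Submodule.span k {u : MvPolynomial (Fin 3 × ℕ) k |
        ∃ m : (Fin 3 × ℕ) →₀ ℕ, u = monomial m 1 ∧
          (m.sum fun _ e => e) = (m.sum fun p e => p.2 * e) + 1},
      ψ f ∈ Submodule.span k {u : MvPolynomial (Fin 3 × ℕ) k |
        ∃ m : (Fin 3 × ℕ) →₀ ℕ, u = monomial m 1 ∧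
          (m.sum fun _ e => e) = (m.sum fun p e => p.2 * e) + 1}) ∧
    (∀ g ∈ Submodule.span k {u : MvPolynomial (Fin 3 × ℕ) k |
        ∃ m : (Fin 3 × ℕ) →₀ ℕ, u = monomial m 1 ∧
          (m.sum fun _ e => e) = (m.sum fun p e => p.2 * e) + 1},
      ∃ f ∈ Submodule.span k {u : MvPolynomial (Fin 3 × ℕ) k |
        ∃ m : (Fin 3 × ℕ) →₀ ℕ, u = monomial m 1 ∧
          (m.sum fun _ e => e) = (m.sum fun p e => p.2 * e) + 1}, ψ f = g) := by
  set u := C ((2 : k)⁻¹) * δ (δ w) with hu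
  have e2 : δ (δ w) = 2 * X (1, 1) ^ 2 + 2 * (X (1, 0) * X (1, 2)) - X (0, 2) * X (2, 0)
      - 2 * (X (0, 1) * X (2, 1)) - X (0, 0) * X (2, 2) := by
    rw [hw]
    simp only [map_sub, map_add, pow_two, Derivation.leibniz, hδ, smul_eq_mul]
    ring
  have d2 : d1 (2 : MvPolynomial (Fin 3 × ℕ) k) = 0 := by
    exact_mod_cast d1.map_natCast 2
  have D2 : D1 (2 : MvPolynomial (Fin 3 × ℕ) k) = 0 := by
    exact_mod_cast D1.map_natCast 2
  have du : d1 u = 0 := by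
    rw [hu, Derivation.leibniz, ← algebraMap_eq, Derivation.map_algebraMap, e2]
    simp only [map_sub, map_add, pow_two, Derivation.leibniz, hd1x, hd1y, hd1z, smul_eq_mul, d2]
    ring
  have Du : D1 u = 0 := by rw [hD1, du, mul_zero]
  have uh : IsWeightedHomogeneous novWt u 0 := by
    have hX (p q : Fin 3 × ℕ) (h : novWt p + novWt q = 0) :
        X p * X q ∈ weightedHomogeneousSubmodule k novWt 0 := by
      rw [mem_weightedHomogeneousSubmodule, ← h]
      exact (isWeightedHomogeneous_X k novWt p).mul (isWeightedHomogeneous_X k novWt q)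
    rw [← mem_weightedHomogeneousSubmodule, hu, ← smul_eq_C_mul, e2, pow_two]
    simp only [two_mul]
    refine Submodule.smul_mem _ _ ?_
    refine sub_mem (sub_mem (sub_mem (add_mem (add_mem ?_ ?_) (add_mem ?_ ?_)) ?_)
      (add_mem ?_ ?_)) ?_ <;> exact hX _ _ (by simp [novWt])
  have Dx (r : ℕ) : D1 (X ((0 : Fin 3), r)) = u * (2 * X (1, r)) := by rw [hD1, hd1x]
  have Dy (r : ℕ) : D1 (X ((1 : Fin 3), r)) = u * X (2, r) := by rw [hD1, hd1y]
  have Dz (r : ℕ) : D1 (X ((2 : Fin 3), r)) = 0 := by rw [hD1, hd1z, mul_zero]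
  have Dxx (r : ℕ) : D1 (u * (2 * X (1, r))) = 2 * (u * (u * X (2, r))) := by
    simp only [Derivation.leibniz, Du, Dy, D2, smul_eq_mul]
    ring
  have Dyy (r : ℕ) : D1 (u * X (2, r)) = 0 := by
    simp only [Derivation.leibniz, Du, Dz, smul_eq_mul, mul_zero, add_zero]
  have Dxxx (r : ℕ) : D1 (2 * (u * (u * X (2, r)))) = 0 := by
    simp only [Derivation.leibniz, Du, Dz, D2, smul_eq_mul, mul_zero, add_zero]
  have hX (i : Fin 3) (r : ℕ) :
      (X (i, r) : MvPolynomial (Fin 3 × ℕ) k) ∈ weightedHomogeneousSubmodule k novWt (1 - r) :=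
    isWeightedHomogeneous_X k novWt (i, r)
  have hU (n : ℤ) (f : MvPolynomial (Fin 3 × ℕ) k)
      (hf : f ∈ weightedHomogeneousSubmodule k novWt n) :
      u * f ∈ weightedHomogeneousSubmodule k novWt n := by
    rw [mem_weightedHomogeneousSubmodule] at hf ⊢
    simpa using uh.mul hf
  have key : ∀ p, IsWeightedHomogeneous novWt (ψ (X p)) (novWt p) := by
    rintro ⟨i, r⟩
    rw [← mem_weightedHomogeneousSubmodule]
    change _ ∈ weightedHomogeneousSubmodule k novWt (1 - r)
    have h3 : (⇑D1)^[3] (X (i, r)) = 0 := by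
      fin_cases i <;>
        simp [Function.iterate_succ, Dx, Dy, Dz, Dxx, Dyy, Dxxx, -Derivation.leibniz]
    rw [hψ _ 3 h3]
    refine Submodule.sum_mem _ fun n hn => Submodule.smul_mem _ _ ?_
    rw [Finset.mem_range] at hn
    have hx := hX i r
    interval_cases n
    · exact hx
    · change D1 (X (i, r)) ∈ _
      fin_cases i
      · change D1 (X (0, r)) ∈ _
        rw [Dx, two_mul]
        exact hU _ _ (add_mem (hX _ _) (hX _ _))
      · change D1 (X (1, r)) ∈ _
        rw [Dy]
        exact hU _ _ (hX _ _)
      · change D1 (X (2, r)) ∈ _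
        rw [Dz]
        exact zero_mem _
    · change D1 (D1 (X (i, r))) ∈ _
      fin_cases i
      · change D1 (D1 (X (0, r))) ∈ _
        rw [Dx, Dxx, two_mul]
        exact add_mem (hU _ _ (hU _ _ (hX _ _))) (hU _ _ (hU _ _ (hX _ _)))
      · change D1 (D1 (X (1, r))) ∈ _
        rw [Dy, Dyy]
        exact zero_mem _
      · change D1 (D1 (X (2, r))) ∈ _
        rw [Dz, map_zero]
        exact zero_mem _
  rw [novSpan_eq]
  constructor
  · intro f hf
    rw [mem_weightedHomogeneousSubmodule] at hf
    rw [← hf.weightedHomogeneousComponent_same, nov_comm ψ key]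
    exact weightedHomogeneousComponent_mem _ _ _
  · intro g hg
    rw [mem_weightedHomogeneousSubmodule] at hg
    refine ⟨weightedHomogeneousComponent novWt 1 (ψ.symm g),
      weightedHomogeneousComponent_mem _ _ _, ?_⟩
    rw [nov_comm ψ key, AlgEquiv.apply_symm_apply, hg.weightedHomogeneousComponent_same]
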